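/- arXiv:1806.07640 — 2 statements merged into one kernel-verified Lean document; each statement's English description precedes it below -/
import Mathlib

section
/- Set β = (n−m)/n and Δ = (mq + (n−m)p)(1 − αβ) − αm(q − αβ(q−p)). Then Δ > 0, and the triple defined by π̄₂ = (1−α)αp/Δ, π̄₁ = (1−α)α(q − αβ(q−p))/Δ, and π̄₀ = (1−α)/k + π̄₁ satisfies the mean-field PageRank linear system. -/
noncomputable section

/-- the mean-field PageRank linear system (equations (i)–(iii)). -/
def MeanFieldSystem (k m n p q α π₀ π₁ π₂ : ℝ) : Prop :=
  (π₀ - π₀ * (α * k * q / (m * q + (n - m) * p)) - π₁ * (α * (m - k) * q / (m * q + (n - m) * p))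
      - π₂ * (α * (n - m) / n) = (1 - α) / k) ∧
  (-(π₀ * (α * k * q / (m * q + (n - m) * p))) + π₁
      - π₁ * (α * (m - k) * q / (m * q + (n - m) * p)) - π₂ * (α * (n - m) / n) = 0) ∧
  (-(π₀ * (α * k * p / (m * q + (n - m) * p))) - π₁ * (α * (m - k) * p / (m * q + (n - m) * p))
      + π₂ - π₂ * (α * (n - m) / n) = 0)

/-!
The system depends on `π₀` and `π₁` only through the community mass `S = k π₀ + (m - k) π₁`, apart
from the relation `π₀ = (1 - α) / k + π₁`. With `D = m q + (n - m) p` and `β = (n - m) / n` it reads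
`π₁ = α q S / D + α β π₂` and `π₂ = α p S / D + α β π₂`, and the explicit triple has
`S / D = (1 - α) (1 - α β) / Δ`.

For the positivity of `Δ`, the relation `β n = n - m` makes `Δ` divisible by `1 - α`, with quotient
`m q (1 - α β) + (n - m) p (1 + α (1 - β))`. Since `β ∈ [0, 1]`, the factors `1 - α β` and
`1 + α (1 - β)` are at least `1 - |α|`, so `Δ ≥ (1 - α) (1 - |α|) D`.
-/

/-- The mean-field degree `D = m q + (n - m) p` of a community vertex: `m` neighbours inside the
community with probability `q` each and `n - m` outside it with probability `p` each. -/
def communityDegree (m n p q : ℝ) : ℝ :=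
  m * q + (n - m) * p

/-- The fraction `β = (n - m) / n` of the vertices that lie outside the community. -/
def outsideFraction (m n : ℝ) : ℝ :=
  (n - m) / n

/-- The common denominator `Δ` of the explicit solution of the mean-field PageRank system. -/
def solutionDenom (m n p q α : ℝ) : ℝ :=
  communityDegree m n p q * (1 - α * outsideFraction m n)
    - α * m * (q - α * outsideFraction m n * (q - p))

/-- The total PageRank mass `S = k π₀ + (m - k) π₁` of the community, whose `k` seed vertices carry
`π₀` each and whose other `m - k` vertices carry `π₁` each. -/
def communityMass (k m π₀ π₁ : ℝ) : ℝ :=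
  k * π₀ + (m - k) * π₁

section Positivity

variable {m n p q α : ℝ}

lemma outsideFraction_mem_Icc (hm : 0 ≤ m) (hmn : m ≤ n) :
    outsideFraction m n ∈ Set.Icc (0 : ℝ) 1 :=
  ⟨div_nonneg (sub_nonneg.2 hmn) (hm.trans hmn),
    div_le_one_of_le₀ (sub_le_self n hm) (hm.trans hmn)⟩

lemma one_sub_abs_le_one_sub_mul {t : ℝ} (ht : t ∈ Set.Icc (0 : ℝ) 1) :
    1 - |α| ≤ 1 - α * t := by
  have : α * t ≤ |α| := calc
    α * t ≤ |α| * t := mul_le_mul_of_nonneg_right (le_abs_self α) ht.1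
    _ ≤ |α| := mul_le_of_le_one_right (abs_nonneg α) ht.2
  linarith

lemma solutionDenom_eq_one_sub_mul (hn : n ≠ 0) :
    solutionDenom m n p q α =
      (1 - α) * (m * q * (1 - α * outsideFraction m n)
        + (n - m) * p * (1 + α * (1 - outsideFraction m n))) := by
  unfold solutionDenom communityDegree outsideFraction
  field_simp
  ring

lemma one_sub_mul_communityDegree_le_solutionDenom (hm : 0 ≤ m) (hmn : m ≤ n) (hn : n ≠ 0)
    (hp : 0 ≤ p) (hq : 0 ≤ q) (hα : α ≤ 1) :
    (1 - α) * ((1 - |α|) * communityDegree m n p q) ≤ solutionDenom m n p q α := by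
  have hβ := outsideFraction_mem_Icc hm hmn
  have inside_weight : 1 - |α| ≤ 1 - α * outsideFraction m n := one_sub_abs_le_one_sub_mul hβ
  have outside_weight : 1 - |α| ≤ 1 + α * (1 - outsideFraction m n) := by
    simpa using one_sub_abs_le_one_sub_mul (α := -α) (Set.Icc.mem_iff_one_sub_mem.1 hβ)
  have inside_nonneg : 0 ≤ m * q := mul_nonneg hm hq
  have outside_nonneg : 0 ≤ (n - m) * p := mul_nonneg (sub_nonneg.2 hmn) hp
  rw [solutionDenom_eq_one_sub_mul hn]
  refine mul_le_mul_of_nonneg_left ?_ (sub_nonneg.2 hα)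
  calc (1 - |α|) * communityDegree m n p q
      = m * q * (1 - |α|) + (n - m) * p * (1 - |α|) := by unfold communityDegree; ring
    _ ≤ m * q * (1 - α * outsideFraction m n)
        + (n - m) * p * (1 + α * (1 - outsideFraction m n)) :=
      add_le_add (mul_le_mul_of_nonneg_left inside_weight inside_nonneg)
        (mul_le_mul_of_nonneg_left outside_weight outside_nonneg)

lemma solutionDenom_pos (hm : 0 ≤ m) (hmn : m ≤ n) (hp : 0 ≤ p) (hq : 0 ≤ q)
    (hD : 0 < communityDegree m n p q) (hα : |α| < 1) :
    0 < solutionDenom m n p q α := by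
  have hn : n ≠ 0 := by
    rintro rfl
    obtain rfl : m = 0 := le_antisymm hmn hm
    simp [communityDegree] at hD
  have hα₁ : α < 1 := (abs_lt.1 hα).2
  exact (mul_pos (sub_pos.2 hα₁) (mul_pos (sub_pos.2 hα) hD)).trans_le
    (one_sub_mul_communityDegree_le_solutionDenom hm hmn hn hp hq hα₁.le)

end Positivity

section Solution

variable {k m n p q α : ℝ}

lemma meanFieldSystem_iff {π₀ π₁ π₂ : ℝ} :
    MeanFieldSystem k m n p q α π₀ π₁ π₂ ↔
      π₀ = (1 - α) / k + π₁ ∧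
      π₁ = α * q * (communityMass k m π₀ π₁ / communityDegree m n p q)
        + α * outsideFraction m n * π₂ ∧
      π₂ = α * p * (communityMass k m π₀ π₁ / communityDegree m n p q)
        + α * outsideFraction m n * π₂ := by
  have inflow (r : ℝ) :
      α * r * (communityMass k m π₀ π₁ / communityDegree m n p q) =
        π₀ * (α * k * r / (m * q + (n - m) * p))
          + π₁ * (α * (m - k) * r / (m * q + (n - m) * p)) := by
    unfold communityMass communityDegree
    ring
  have outside_inflow : α * outsideFraction m n * π₂ = π₂ * (α * (n - m) / n) := by
    unfold outsideFraction
    ring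
  rw [inflow, inflow, outside_inflow, MeanFieldSystem]
  constructor <;> rintro ⟨h₀, h₁, h₂⟩ <;> refine ⟨?_, ?_, ?_⟩ <;> linarith

lemma communityMass_explicit (hk : k ≠ 0) (hΔ : solutionDenom m n p q α ≠ 0) :
    communityMass k m
        ((1 - α) / k
          + (1 - α) * α * (q - α * outsideFraction m n * (q - p)) / solutionDenom m n p q α)
        ((1 - α) * α * (q - α * outsideFraction m n * (q - p)) / solutionDenom m n p q α) =
      communityDegree m n p q
        * ((1 - α) * (1 - α * outsideFraction m n) / solutionDenom m n p q α) := by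
  unfold communityMass
  field_simp
  unfold solutionDenom
  ring

lemma meanFieldSystem_explicit (hk : k ≠ 0) (hD : communityDegree m n p q ≠ 0)
    (hΔ : solutionDenom m n p q α ≠ 0) :
    MeanFieldSystem k m n p q α
      ((1 - α) / k
        + (1 - α) * α * (q - α * outsideFraction m n * (q - p)) / solutionDenom m n p q α)
      ((1 - α) * α * (q - α * outsideFraction m n * (q - p)) / solutionDenom m n p q α)
      ((1 - α) * α * p / solutionDenom m n p q α) := by
  rw [meanFieldSystem_iff, communityMass_explicit hk hΔ, mul_div_cancel_left₀ _ hD]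
  refine ⟨rfl, ?_, ?_⟩ <;> ring

end Solution

theorem mean_field_explicit_solution_general
    (k m n p q α : ℝ) (hk : k ≠ 0) (hm : 0 ≤ m) (hmn : m ≤ n) (hp : 0 ≤ p) (hq : 0 ≤ q)
    (hD : 0 < m * q + (n - m) * p) (hα : |α| < 1) :
    let β := (n - m) / n
    let Δ := (m * q + (n - m) * p) * (1 - α * β) - α * m * (q - α * β * (q - p))
    0 < Δ ∧
      MeanFieldSystem k m n p q α
        ((1 - α) / k + (1 - α) * α * (q - α * β * (q - p)) / Δ)
        ((1 - α) * α * (q - α * β * (q - p)) / Δ)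
        ((1 - α) * α * p / Δ) := by
  have hΔ : 0 < solutionDenom m n p q α := solutionDenom_pos hm hmn hp hq hD hα
  exact ⟨hΔ, meanFieldSystem_explicit hk hD.ne' hΔ.ne'⟩

/-- the explicit formulas solve the mean-field PageRank system, and the
denominator `Δ` is positive. -/
theorem mean_field_explicit_solution
    (k m n p q α : ℝ) (hk : 0 < k) (hkm : k < m) (hmn : m < n)
    (hp : 0 < p) (hpq : p ≤ q) (hα : α ∈ Set.Ioo (0 : ℝ) 1) :
    let β := (n - m) / n
    let Δ := (m * q + (n - m) * p) * (1 - α * β) - α * m * (q - α * β * (q - p))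
    0 < Δ ∧
      MeanFieldSystem k m n p q α
        ((1 - α) / k + (1 - α) * α * (q - α * β * (q - p)) / Δ)
        ((1 - α) * α * (q - α * β * (q - p)) / Δ)
        ((1 - α) * α * p / Δ) := by
  have hm : 0 < m := hk.trans hkm
  have hq : 0 < q := hp.trans_le hpq
  exact mean_field_explicit_solution_general k m n p q α hk.ne' hm.le hmn.le hp.le hq.le
    (add_pos (mul_pos hm hq) (mul_pos (sub_pos.2 hmn) hp))
    (abs_lt.2 ⟨neg_one_lt_zero.trans hα.1, hα.2⟩)
end
end

section
/- Set ρ = q/p and β = (n−m)/n, and assume p < q so that ρ > 1 and β ∈ (0,1). With Δ = (mq + (n−m)p)(1 − αβ) − αm(q − αβ(q−p)), π̄₂ = (1−α)αp/Δ and π̄₁ = (1−α)α(q − αβ(q−p))/Δ, one has: (a) π̄₁ − π̄₂ = (ρ−1)(1−αβ)·π̄₂; (b) the quantity Q(α) = α²β(ρ−1) − α(ρβ + ρ + β²/(1−β)) + ρ + β/(1−β) satisfies m·p·Q(α) = Δ and Q(α) > 0; and (c) π̄₁ − π̄₂ = α(1−α)(ρ−1)(1−αβ) / ( m·Q(α)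 ). -/
noncomputable section

/-!
Everything rests on `Δ = m p Q(α)`: since `1 - β = m / n`, the size `n - m` of the complement is
`m β / (1 - β)`, and dividing `Δ` by `m p` leaves a quadratic in `α` depending only on `ρ = q / p`
and `β`. That quadratic vanishes at `α = 1`, and its cofactor `ρ (1 - α β) + β / (1 - β) + α β` is a
sum of nonnegative terms, the first of them positive, for every `ρ > 0`.
-/

namespace MeanFieldPPR

section Field

variable {K : Type*} [Field K]

/-- The fraction `β` of the `n` vertices that lie outside a community of size `m`. -/
def outsideFraction (m n : K) : K := (n - m) / n

/-- The common denominator `Δ` of the mean-field Personalized PageRank values. -/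
def denominator (m n p q α : K) : K :=
  (m * q + (n - m) * p) * (1 - α * outsideFraction m n)
    - α * m * (q - α * outsideFraction m n * (q - p))

/-- The mean-field Personalized PageRank `π̄₁` of a non-seed vertex of the community. -/
def insideRank (m n p q α : K) : K :=
  (1 - α) * α * (q - α * outsideFraction m n * (q - p)) / denominator m n p q α

/-- The mean-field Personalized PageRank `π̄₂` of a vertex outside the community. -/
def outsideRank (m n p q α : K) : K :=
  (1 - α) * α * p / denominator m n p q α

/-- The quadratic `Q(α)`: the denominator `Δ` normalized by `m * p`, in terms of the density ratio
`ρ = q / p` and the outside fraction `β`. -/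
def normalizedDenominator (ρ β α : K) : K :=
  α ^ 2 * β * (ρ - 1) - α * (ρ * β + ρ + β ^ 2 / (1 - β)) + ρ + β / (1 - β)

variable {m n p q α ρ β : K}

theorem one_sub_outsideFraction (hn : n ≠ 0) : 1 - outsideFraction m n = m / n := by
  rw [outsideFraction, sub_div, div_self hn, sub_sub_cancel]

theorem mul_outsideFraction_div_one_sub (hm : m ≠ 0) (hn : n ≠ 0) :
    m * (outsideFraction m n / (1 - outsideFraction m n)) = n - m := by
  rw [one_sub_outsideFraction hn, outsideFraction]
  field_simp

theorem mul_normalizedDenominator_eq_denominator (hm : m ≠ 0) (hn : n ≠ 0) (hp : p ≠ 0) :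
    m * p * normalizedDenominator (q / p) (outsideFraction m n) α = denominator m n p q α := by
  have hq : p * (q / p) = q := mul_div_cancel₀ q hp
  rw [normalizedDenominator, denominator, ← mul_outsideFraction_div_one_sub hm hn]
  generalize outsideFraction m n = β
  linear_combination (m * (1 - α * β) - α * m * (1 - α * β)) * hq

theorem normalizedDenominator_eq_mul (hβ : β ≠ 1) :
    normalizedDenominator ρ β α =
      (1 - α) * (ρ * (1 - α * β) + β / (1 - β) + α * β) := by
  have hβ' : 1 - β ≠ 0 := sub_ne_zero.mpr hβ.symm
  rw [normalizedDenominator]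
  field_simp
  ring

theorem insideRank_sub_outsideRank (hp : p ≠ 0) :
    insideRank m n p q α - outsideRank m n p q α =
      (q / p - 1) * (1 - α * outsideFraction m n) * outsideRank m n p q α := by
  have numerator_sub : q - α * outsideFraction m n * (q - p) - p =
      (q / p - 1) * (1 - α * outsideFraction m n) * p := by
    field_simp
    ring
  rw [insideRank, outsideRank, ← sub_div, ← mul_sub, numerator_sub]
  ring

theorem outsideRank_eq_div_normalizedDenominator (hm : m ≠ 0) (hn : n ≠ 0) (hp : p ≠ 0) :
    outsideRank m n p q α =
      α * (1 - α) / (m * normalizedDenominator (q / p) (outsideFraction m n) α) := by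
  rw [outsideRank, ← mul_normalizedDenominator_eq_denominator hm hn hp, mul_right_comm m p,
    mul_div_mul_right _ _ hp, mul_comm α]

theorem insideRank_sub_outsideRank_eq_div (hm : m ≠ 0) (hn : n ≠ 0) (hp : p ≠ 0) :
    insideRank m n p q α - outsideRank m n p q α =
      α * (1 - α) * (q / p - 1) * (1 - α * outsideFraction m n) /
        (m * normalizedDenominator (q / p) (outsideFraction m n) α) := by
  rw [insideRank_sub_outsideRank hp, outsideRank_eq_div_normalizedDenominator hm hn hp]
  ring

end Field

section OrderedField

variable {K : Type*} [Field K] [LinearOrder K] [IsStrictOrderedRing K] {m n α ρ β : K}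

theorem outsideFraction_nonneg (hn : 0 ≤ n) (hmn : m ≤ n) : 0 ≤ outsideFraction m n :=
  div_nonneg (sub_nonneg.mpr hmn) hn

theorem outsideFraction_lt_one (hm : 0 < m) (hn : 0 < n) : outsideFraction m n < 1 := by
  rw [← sub_pos, one_sub_outsideFraction hn.ne']
  exact div_pos hm hn

theorem normalizedDenominator_pos (hρ : 0 < ρ) (hβ₀ : 0 ≤ β) (hβ₁ : β < 1)
    (hα₀ : 0 ≤ α) (hα₁ : α < 1) : 0 < normalizedDenominator ρ β α := by
  have hαβ : α * β < 1 := mul_lt_one_of_nonneg_of_lt_one_left hα₀ hα₁ hβ₁.le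
  have ratio_term_pos : 0 < ρ * (1 - α * β) := mul_pos hρ (sub_pos.mpr hαβ)
  have odds_nonneg : 0 ≤ β / (1 - β) := div_nonneg hβ₀ (sub_nonneg.mpr hβ₁.le)
  rw [normalizedDenominator_eq_mul hβ₁.ne]
  exact mul_pos (sub_pos.mpr hα₁)
    (add_pos_of_pos_of_nonneg (add_pos_of_pos_of_nonneg ratio_term_pos odds_nonneg)
      (mul_nonneg hα₀ hβ₀))

end OrderedField

end MeanFieldPPR

open MeanFieldPPR in
theorem mean_field_ppr_gap_general {K : Type*} [Field K] [LinearOrder K] [IsStrictOrderedRing K]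
    {m n p q α : K} (hm : 0 < m) (hmn : m ≤ n) (hp : 0 < p) (hq : 0 < q)
    (hα₀ : 0 ≤ α) (hα₁ : α < 1) :
    (insideRank m n p q α - outsideRank m n p q α =
      (q / p - 1) * (1 - α * outsideFraction m n) * outsideRank m n p q α) ∧
    (m * p * normalizedDenominator (q / p) (outsideFraction m n) α = denominator m n p q α ∧
      0 < normalizedDenominator (q / p) (outsideFraction m n) α) ∧
    (insideRank m n p q α - outsideRank m n p q α =
      α * (1 - α) * (q / p - 1) * (1 - α * outsideFraction m n) /
        (m * normalizedDenominator (q / p) (outsideFraction m n) α)) := by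
  have hn : 0 < n := hm.trans_le hmn
  exact ⟨insideRank_sub_outsideRank hp.ne',
    ⟨mul_normalizedDenominator_eq_denominator hm.ne' hn.ne' hp.ne',
      normalizedDenominator_pos (div_pos hq hp) (outsideFraction_nonneg hn.le hmn)
        (outsideFraction_lt_one hm hn) hα₀ hα₁⟩,
    insideRank_sub_outsideRank_eq_div hm.ne' hn.ne' hp.ne'⟩

/-- formulas for the mean-field PageRank gap `π̄₁ - π̄₂`. -/
theorem mean_field_ppr_gap
    (k m n p q α : ℝ) (hk : 0 < k) (hkm : k < m) (hmn : m < n)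
    (hp : 0 < p) (hpq : p < q) (hα : α ∈ Set.Ioo (0 : ℝ) 1) :
    let ρ := q / p
    let β := (n - m) / n
    let Δ := (m * q + (n - m) * p) * (1 - α * β) - α * m * (q - α * β * (q - p))
    let π₂ := (1 - α) * α * p / Δ
    let π₁ := (1 - α) * α * (q - α * β * (q - p)) / Δ
    let Q := fun a : ℝ => a ^ 2 * β * (ρ - 1) - a * (ρ * β + ρ + β ^ 2 / (1 - β))
      + ρ + β / (1 - β)
    (π₁ - π₂ = (ρ - 1) * (1 - α * β) * π₂) ∧
    (m * p * Q α = Δ ∧ 0 < Q α) ∧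
    (π₁ - π₂ = α * (1 - α) * (ρ - 1) * (1 - α * β) / (m * Q α)) :=
  mean_field_ppr_gap_general (hk.trans hkm) hmn.le hp (hp.trans hpq) hα.1.le hα.2
end
end
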